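/- Let Λ be a trace-preserving linear map on d×d complex matrices, and suppose its Choi–Jamiołkowski matrix is QC: (id⊗Λ)(P₊) = ∑_i p_i σ_i ⊗ |e_i⟩⟨e_i| with {e_i} an orthonormal basis of ℂ^d, σ_i states, and (p_i) a probability distribution. Then ∑_i p_i σ_i = (1/d)·1; consequently the matrices E_i := d·p_i·σ_iᵀ are positive semidefinite and sum to the identity, i.e. they form a POVM. -/

import Mathlib

open Matrix Kronecker BigOperators
open scoped ComplexOrder

noncomputable section

/-- Rank-one projector `|v⟩⟨v|`. -/
def proj {n : Type*} (v : n → ℂ) : Matrix n n ℂ :=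
  Matrix.of fun a b => v a * star (v b)

/-- `e` is an orthonormal basis (an orthonormal family of `d` vectors) of `ℂ^d`. -/
def ONB (d : ℕ) (e : Fin d → Fin d → ℂ) : Prop :=
  ∀ i j, star (e i) ⬝ᵥ e j = if i = j then 1 else 0

/-- A quantum state: positive semidefinite with unit trace. -/
def IsState {n : Type*} [Fintype n] [DecidableEq n] (ρ : Matrix n n ℂ) : Prop :=
  ρ.PosSemidef ∧ ρ.trace = 1

/-- The maximally entangled projector `P₊ = (1/d) ∑_{i,j} |ii⟩⟨jj|`. -/
def Pplus (d : ℕ) : Matrix (Fin d × Fin d) (Fin d × Fin d) ℂ :=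
  Matrix.of fun p q => if p.1 = p.2 ∧ q.1 = q.2 then (d : ℂ)⁻¹ else 0

/-- `id ⊗ Λ`: the extension of `Λ` acting on the second tensor factor. -/
def idTensor {dA dB : ℕ}
    (Λ : Matrix (Fin dB) (Fin dB) ℂ → Matrix (Fin dB) (Fin dB) ℂ)
    (M : Matrix (Fin dA × Fin dB) (Fin dA × Fin dB) ℂ) :
    Matrix (Fin dA × Fin dB) (Fin dA × Fin dB) ℂ :=
  Matrix.of fun p q => Λ (Matrix.of fun b b' => M (p.1, b) (q.1, b')) p.2 q.2

/-- `Λ ⊗ id`: the extension of `Λ` acting on the first tensor factor. -/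
def tensorId {dA dB : ℕ}
    (Λ : Matrix (Fin dA) (Fin dA) ℂ → Matrix (Fin dA) (Fin dA) ℂ)
    (M : Matrix (Fin dA × Fin dB) (Fin dA × Fin dB) ℂ) :
    Matrix (Fin dA × Fin dB) (Fin dA × Fin dB) ℂ :=
  Matrix.of fun p q => Λ (Matrix.of fun a a' => M (a, p.2) (a', q.2)) p.1 q.1

/-- Partial trace over the first factor. -/
def ptraceA {dA dB : ℕ} (M : Matrix (Fin dA × Fin dB) (Fin dA × Fin dB) ℂ) :
    Matrix (Fin dB) (Fin dB) ℂ :=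
  Matrix.of fun b b' => ∑ a, M (a, b) (a, b')

/-- Partial trace over the second factor. -/
def ptraceB {dA dB : ℕ} (M : Matrix (Fin dA × Fin dB) (Fin dA × Fin dB) ℂ) :
    Matrix (Fin dA) (Fin dA) ℂ :=
  Matrix.of fun a a' => ∑ b, M (a, b) (a', b)

/-- Trace preserving map. -/
def TracePreserving {d : ℕ}
    (Λ : Matrix (Fin d) (Fin d) ℂ → Matrix (Fin d) (Fin d) ℂ) : Prop :=
  ∀ X, (Λ X).trace = X.trace

/-- QC (quantum–classical) bipartite state. -/
def IsQC {dA dB : ℕ} (σ : Matrix (Fin dA × Fin dB) (Fin dA × Fin dB) ℂ) : Prop :=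
  ∃ (e : Fin dB → Fin dB → ℂ) (p : Fin dB → ℝ)
    (ρ : Fin dB → Matrix (Fin dA) (Fin dA) ℂ),
    ONB dB e ∧ (∀ i, 0 ≤ p i) ∧ (∑ i, p i) = 1 ∧ (∀ i, IsState (ρ i)) ∧
      σ = ∑ i, (p i : ℂ) • (ρ i ⊗ₖ proj (e i))

/-- CQ (classical–quantum) bipartite state. -/
def IsCQ {dA dB : ℕ} (σ : Matrix (Fin dA × Fin dB) (Fin dA × Fin dB) ℂ) : Prop :=
  ∃ (e : Fin dA → Fin dA → ℂ) (p : Fin dA → ℝ)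
    (ρ : Fin dA → Matrix (Fin dB) (Fin dB) ℂ),
    ONB dA e ∧ (∀ i, 0 ≤ p i) ∧ (∑ i, p i) = 1 ∧ (∀ i, IsState (ρ i)) ∧
      σ = ∑ i, (p i : ℂ) • (proj (e i) ⊗ₖ ρ i)

/-- CC (classical–classical) bipartite state. -/
def IsCC {dA dB : ℕ} (σ : Matrix (Fin dA × Fin dB) (Fin dA × Fin dB) ℂ) : Prop :=
  ∃ (e : Fin dA → Fin dA → ℂ) (f : Fin dB → Fin dB → ℂ) (p : Fin dA → Fin dB → ℝ),
    ONB dA e ∧ ONB dB f ∧ (∀ i j, 0 ≤ p i j) ∧ (∑ i, ∑ j, p i j) = 1 ∧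
      σ = ∑ i, ∑ j, (p i j : ℂ) • (proj (e i) ⊗ₖ proj (f j))

/-!
Trace out the second factor of the Choi matrix. As `Λ` preserves the trace, this undoes `Λ` and
leaves the reduced state `1/d` of `P₊`; on the QC side each projector `|eᵢ⟩⟨eᵢ|` has trace one, so
`∑ᵢ pᵢ σᵢ` remains.
-/

theorem trace_proj {n : Type*} [Fintype n] (v : n → ℂ) : (proj v).trace = star v ⬝ᵥ v :=
  (trace_vecMulVec v (star v)).trans (dotProduct_comm v (star v))

theorem ONB.trace_proj_eq_one {d : ℕ} {e : Fin d → Fin d → ℂ} (he : ONB d e) (i : Fin d) :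
    (proj (e i)).trace = 1 := by
  rw [trace_proj, he i i, if_pos rfl]

section PartialTrace

variable {dA dB : ℕ}

theorem ptraceB_sum {ι : Type*} (s : Finset ι)
    (M : ι → Matrix (Fin dA × Fin dB) (Fin dA × Fin dB) ℂ) :
    ptraceB (∑ i ∈ s, M i) = ∑ i ∈ s, ptraceB (M i) := by
  ext a a'
  simp only [ptraceB, of_apply, Matrix.sum_apply]
  exact Finset.sum_comm

theorem ptraceB_kronecker (A : Matrix (Fin dA) (Fin dA) ℂ) (B : Matrix (Fin dB) (Fin dB) ℂ) :
    ptraceB (A ⊗ₖ B) = B.trace • A := by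
  ext a a'
  simp only [ptraceB, of_apply, kronecker_apply, Matrix.smul_apply, smul_eq_mul, trace, diag_apply]
  rw [← Finset.mul_sum, mul_comm]

theorem TracePreserving.ptraceB_idTensor
    {Λ : Matrix (Fin dB) (Fin dB) ℂ → Matrix (Fin dB) (Fin dB) ℂ} (hΛ : TracePreserving Λ)
    (M : Matrix (Fin dA × Fin dB) (Fin dA × Fin dB) ℂ) :
    ptraceB (idTensor Λ M) = ptraceB M := by
  ext a a'
  exact hΛ (of fun b b' => M (a, b) (a', b'))

theorem ptraceB_Pplus (d : ℕ) : ptraceB (Pplus d) = (d : ℂ)⁻¹ • 1 := by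
  ext a a'
  simp [ptraceB, Pplus, one_apply, ite_and, eq_comm]

end PartialTrace

theorem natCast_smul_inv_smul_one {K : Type*} [DivisionRing K] [CharZero K] (d : ℕ) :
    (d : K) • (d : K)⁻¹ • (1 : Matrix (Fin d) (Fin d) K) = 1 := by
  obtain rfl | hd := eq_or_ne d 0
  · exact Subsingleton.elim _ _
  · exact smul_inv_smul₀ (Nat.cast_ne_zero.mpr hd) 1

theorem povm_from_qc_choi_general {ι : Type*} [Fintype ι] (d : ℕ)
    (Λ : Matrix (Fin d) (Fin d) ℂ → Matrix (Fin d) (Fin d) ℂ) (hTP : TracePreserving Λ)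
    (A : ι → Matrix (Fin d) (Fin d) ℂ) (hA : ∀ i, (A i).PosSemidef)
    (ω : ι → Matrix (Fin d) (Fin d) ℂ) (hω : ∀ i, (ω i).trace = 1)
    (hChoi : idTensor Λ (Pplus d) = ∑ i, A i ⊗ₖ ω i) :
    (∑ i, A i = (d : ℂ)⁻¹ • (1 : Matrix (Fin d) (Fin d) ℂ)) ∧
    (∀ i, ((d : ℂ) • (A i)ᵀ).PosSemidef) ∧
    (∑ i, (d : ℂ) • (A i)ᵀ = (1 : Matrix (Fin d) (Fin d) ℂ)) := by
  have hsum : ∑ i, A i = (d : ℂ)⁻¹ • (1 : Matrix (Fin d) (Fin d) ℂ) :=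
    calc
      ∑ i, A i = ∑ i, ptraceB (A i ⊗ₖ ω i) := by simp only [ptraceB_kronecker, hω, one_smul]
      _ = ptraceB (idTensor Λ (Pplus d)) := by rw [hChoi, ptraceB_sum]
      _ = ptraceB (Pplus d) := hTP.ptraceB_idTensor _
      _ = (d : ℂ)⁻¹ • 1 := ptraceB_Pplus d
  refine ⟨hsum, fun i => (hA i).transpose.smul (Nat.cast_nonneg d), ?_⟩
  rw [← Finset.smul_sum, ← transpose_sum, hsum, transpose_smul, transpose_one,
    natCast_smul_inv_smul_one]

/-- If the Choi–Jamiołkowski matrix of a trace-preserving map is QC,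
then `∑ᵢ pᵢ σᵢ = 1/d` and the matrices `Eᵢ := d·pᵢ·σᵢᵀ` form a POVM. -/
theorem povm_from_qc_choi (d : ℕ)
    (Λ : Matrix (Fin d) (Fin d) ℂ →ₗ[ℂ] Matrix (Fin d) (Fin d) ℂ)
    (hTP : TracePreserving (⇑Λ))
    (e : Fin d → Fin d → ℂ) (he : ONB d e)
    (p : Fin d → ℝ) (hp0 : ∀ i, 0 ≤ p i) (hp1 : ∑ i, p i = 1)
    (σ : Fin d → Matrix (Fin d) (Fin d) ℂ) (hσ : ∀ i, IsState (σ i))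
    (hChoi : idTensor (⇑Λ) (Pplus d) = ∑ i, (p i : ℂ) • (σ i ⊗ₖ proj (e i))) :
    (∑ i, (p i : ℂ) • σ i = (d : ℂ)⁻¹ • (1 : Matrix (Fin d) (Fin d) ℂ)) ∧
    (∀ i, ((d : ℂ) • (p i : ℂ) • (σ i)ᵀ).PosSemidef) ∧
    (∑ i, (d : ℂ) • (p i : ℂ) • (σ i)ᵀ = (1 : Matrix (Fin d) (Fin d) ℂ)) := by
  simpa only [transpose_smul] using povm_from_qc_choi_general d Λ hTP (fun i => (p i : ℂ) • σ i)
    (fun i => (hσ i).1.smul (Complex.zero_le_real.mpr (hp0 i))) (fun i => proj (e i))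
    he.trace_proj_eq_one (by simpa only [smul_kronecker] using hChoi)

end
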